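/- Let φ be a nonzero finite Borel measure on Ω_{C°} whose support is contained in a nonempty compact set ϖ ⊂ Ω_{C°}. Then there exists a C-pseudo-cone K ∈ K(C,ϖ) with V_K^Θ = φ. -/

import Mathlib

open MeasureTheory Set Filter
open scoped RealInnerProductSpace ENNReal Topology Pointwise NNReal

noncomputable section

abbrev En (n : ℕ) := EuclideanSpace ℝ (Fin n)

/-- `C` is a pointed closed convex cone with nonempty interior. -/
def IsGoodCone (n : ℕ) (C : Set (En n)) : Prop :=
  IsClosed C ∧ Convex ℝ C ∧ (∀ x ∈ C, ∀ r : ℝ, 0 ≤ r → r • x ∈ C) ∧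
    C ∩ (-C) = {0} ∧ (interior C).Nonempty

/-- The dual cone `C° = {x : ⟨x,y⟩ ≤ 0 ∀ y ∈ C}`. -/
def dualCone (n : ℕ) (C : Set (En n)) : Set (En n) := {x | ∀ y ∈ C, ⟪x, y⟫ ≤ 0}

/-- `Ω_C = S^{n-1} ∩ int C`. -/
def omegaC (n : ℕ) (C : Set (En n)) : Set (En n) := Metric.sphere 0 1 ∩ interior C

/-- `Ω_{C°} = S^{n-1} ∩ int C°`. -/
def omegaDual (n : ℕ) (C : Set (En n)) : Set (En n) :=
  Metric.sphere 0 1 ∩ interior (dualCone n C)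

/-- A pseudo-cone: nonempty closed convex set not containing `0` with `λK ⊆ K` for `λ ≥ 1`. -/
def IsPseudoCone (n : ℕ) (K : Set (En n)) : Prop :=
  K.Nonempty ∧ IsClosed K ∧ Convex ℝ K ∧ (0 : En n) ∉ K ∧ ∀ l : ℝ, 1 ≤ l → l • K ⊆ K

/-- The recession cone of `K`. -/
def recCone (n : ℕ) (K : Set (En n)) : Set (En n) :=
  {z | ∀ x ∈ K, ∀ t : ℝ, 0 ≤ t → x + t • z ∈ K}

/-- A `C`-pseudo-cone: a pseudo-cone with recession cone `C`. -/
def IsCPseudoCone (n : ℕ) (C K : Set (En n)) : Prop := IsPseudoCone n K ∧ recCone n K = C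

/-- The set of outer unit normal vectors of `K` at `x`. -/
def normalsAt (n : ℕ) (K : Set (En n)) (x : En n) : Set (En n) :=
  {u | ‖u‖ = 1 ∧ ∀ y ∈ K, ⟪y, u⟫ ≤ ⟪x, u⟫}

/-- `ν_K^{-1}(ω)`: the boundary points of `K` whose outer unit normal is unique and lies in `ω`. -/
def nuInv (n : ℕ) (K ω : Set (En n)) : Set (En n) :=
  {x | x ∈ frontier K ∧ ∃ u ∈ ω, normalsAt n K x = {u}}

open Classical in
/-- The outer unit normal map `ν_K` (junk value `0` where the normal is not unique). -/
def nuMap (n : ℕ) (K : Set (En n)) (x : En n) : En n :=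
  if h : ∃ u, normalsAt n K x = {u} then h.choose else 0

/-- `Δ(ω)`: the spherical (angular) distance of `ω` from the boundary of `Ω_{C°}`
(the relative boundary of `Ω_{C°}` in the unit sphere is `closure Ω_{C°} \ Ω_{C°}`,
since `Ω_{C°}` is relatively open in the sphere). -/
def sphereAngleDist (n : ℕ) (C ω : Set (En n)) : ℝ :=
  sInf {d | ∃ u ∈ ω, ∃ v ∈ closure (omegaDual n C) \ omegaDual n C,
    d = InnerProductGeometry.angle u v}

/-- `b(K)`: the distance of `K` from the origin. -/
def distOrigin (n : ℕ) (K : Set (En n)) : ℝ := Metric.infDist 0 K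

/-- `C^-(t) = C ∩ H^-(𝔳, t)`. -/
def Cminus (n : ℕ) (C : Set (En n)) (v : En n) (t : ℝ) : Set (En n) :=
  C ∩ {x | ⟪x, v⟫ ≤ t}

/-- The support function `h_K(u) = sup{⟨y,u⟩ : y ∈ K}`. -/
def suppFn (n : ℕ) (K : Set (En n)) (u : En n) : ℝ := sSup ((fun y => ⟪y, u⟫) '' K)

/-- `Θ : C∖{0} → (0,∞)` continuous and homogeneous of degree `-q`. -/
def IsThetaWeight (n : ℕ) (C : Set (En n)) (q : ℝ) (Θ : En n → ℝ) : Prop :=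
  ContinuousOn Θ (C \ {0}) ∧ (∀ y ∈ C \ {0}, 0 < Θ y) ∧
    ∀ y ∈ C \ {0}, ∀ r : ℝ, 0 < r → Θ (r • y) = r ^ (-q) * Θ y

/-- The `Θ`-weighted `n`-dimensional Hausdorff (Lebesgue) measure `H_Θ^n`. -/
def HTheta (n : ℕ) (Θ : En n → ℝ) : Measure (En n) :=
  volume.withDensity fun y => ENNReal.ofReal (Θ y)

/-- The `Θ`-weighted cone-volume measure `V_K^Θ(ω) = H_Θ^n(⋃_{x ∈ ν_K^{-1}(ω)} [0,x])`. -/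
def coneVol (n : ℕ) (Θ : En n → ℝ) (K ω : Set (En n)) : ℝ≥0∞ :=
  HTheta n Θ (⋃ x ∈ nuInv n K ω, segment ℝ (0 : En n) x)

/-- The (unweighted) cone-volume measure `V_K(ω) = H^n(⋃_{x ∈ ν_K^{-1}(ω)} [0,x])`. -/
def coneVolU (n : ℕ) (K ω : Set (En n)) : ℝ≥0∞ :=
  volume (⋃ x ∈ nuInv n K ω, segment ℝ (0 : En n) x)

/-- The `Θ`-weighted surface area measure `S_{n-1}^Θ(K,ω) = ∫_{ν_K^{-1}(ω)} Θ dH^{n-1}`. -/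
def surfTheta (n : ℕ) (Θ : En n → ℝ) (K ω : Set (En n)) : ℝ≥0∞ :=
  ∫⁻ x in nuInv n K ω, ENNReal.ofReal (Θ x) ∂(μH[(n : ℝ) - 1])

/-- `K ∈ K(C,ϖ)`: `K` is a `C`-pseudo-cone that is `C`-determined by `ϖ`. -/
def CDetermined (n : ℕ) (C ϖ K : Set (En n)) : Prop :=
  IsCPseudoCone n C K ∧ K = C ∩ ⋂ u ∈ ϖ, {x | ⟪x, u⟫ ≤ suppFn n K u}

/-- The Wulff shape `[g] = C ∩ ⋂_{u ∈ ϖ} {y : ⟨y,u⟩ ≤ -g(u)}`. -/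
def wulff (n : ℕ) (C ϖ : Set (En n)) (g : En n → ℝ) : Set (En n) :=
  C ∩ ⋂ u ∈ ϖ, {y | ⟪y, u⟫ ≤ -g u}

/-- The `Θ`-weighted covolume `V_Θ(K) = ∫_{C∖K} Θ dH^n`. -/
def covol (n : ℕ) (Θ : En n → ℝ) (C K : Set (En n)) : ℝ≥0∞ := HTheta n Θ (C \ K)

/-- The radial function `ρ_K(v) = min{λ : λv ∈ K}`. -/
def rho (n : ℕ) (K : Set (En n)) (v : En n) : ℝ := sInf {t : ℝ | t • v ∈ K}

/-- The radial map `r_K(v) = ρ_K(v) v`. -/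
def radMap (n : ℕ) (K : Set (En n)) (v : En n) : En n := rho n K v • v

/-- `α_K^{-1}(ω)`: directions `v ∈ Ω_C` with `r_K(v) ∈ ∂'K` (boundary point in `int C` with
unique outer normal) whose unique outer normal lies in `ω`. -/
def alphaInv (n : ℕ) (C K ω : Set (En n)) : Set (En n) :=
  {v ∈ omegaC n C | radMap n K v ∈ frontier K ∧ radMap n K v ∈ interior C ∧
    ∃ u ∈ ω, normalsAt n K (radMap n K v) = {u}}

/-- `μ` is the Borel measure on `Ω_{C°}` representing the `Θ`-weighted cone-volume
measure of `K` (extended by `0` outside `Ω_{C°}`). -/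
def RepsConeVol (n : ℕ) (C : Set (En n)) (Θ : En n → ℝ) (K : Set (En n))
    (μ : Measure (En n)) : Prop :=
  μ (omegaDual n C)ᶜ = 0 ∧
    ∀ ω, MeasurableSet ω → ω ⊆ omegaDual n C → μ ω = coneVol n Θ K ω

/-- `μ` is the Borel measure on `Ω_{C°}` representing the `Θ`-weighted surface area
measure of `K` (extended by `0` outside `Ω_{C°}`). -/
def RepsSurf (n : ℕ) (C : Set (En n)) (Θ : En n → ℝ) (K : Set (En n))
    (μ : Measure (En n)) : Prop :=
  μ (omegaDual n C)ᶜ = 0 ∧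
    ∀ ω, MeasurableSet ω → ω ⊆ omegaDual n C → μ ω = surfTheta n Θ K ω

/-!
The normals and the directions of the cone are put in duality by the cost `c(v, u) = log (-⟪v, u⟫)`
on `(C ∩ S^{n-1}) × ϖ`. For a potential `f` on `ϖ`, with `c`-transform
`f^c(v) = max_u (f(u) - c(v, u))`, the Wulff shape `K` of `e^f` has the gauge
`min_u (-⟪v, u⟫ / e^{f(u)}) = e^{-f^c(v)}`, and its normal in the direction `v` is the point `u`
where the maximum is attained. With `s = n - q` and `σ` the measure with density `Θ / s` on
`C ∩ S^{n-1}`, polar coordinates identify the cone-volume measure of `K` with the image of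
`e^{s f^c} σ` under `v ↦ u`. This measure is equal to `φ` exactly when `f` is a critical point,
suitably normalised by an additive constant, of `∫ f dφ - (φ(ϖ) / s) log ∫ e^{s f^c} dσ`. A
maximiser exists because replacing `f` by its double `c`-transform, which does not decrease the
functional, and subtracting constants reduces the problem to a uniformly bounded equicontinuous
family. The derivative of `f^c` at `v` in the direction `h` is `h(u)` (Danskin), for almost every
`v` since the gauge is Lipschitz and hence a.e. differentiable.
-/

open ProbabilityTheory (mgf cgf mgf_pos' mgf_add_const mgf_mono_of_nonneg)

section Supremum

variable {X : Type*} [TopologicalSpace X] [CompactSpace X]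

lemma le_iSup_continuousMap (F : C(X, ℝ)) (x : X) : F x ≤ ⨆ z, F z :=
  le_ciSup (isCompact_range F.continuous).bddAbove x

lemma tendsto_of_tendsto_iSup_of_unique {ι : Type*} {l : Filter ι} {F : C(X, ℝ)} {a : X}
    (ha : ∀ x, F x = ⨆ z, F z → x = a) {A : ι → X}
    (hA : Tendsto (fun i => F (A i)) l (𝓝 (⨆ z, F z))) : Tendsto A l (𝓝 a) := by
  refine isCompact_univ.le_nhds_of_unique_clusterPt (by simp) fun x _ hx => ha x ?_
  have hFx : MapClusterPt (F x) l (F ∘ A) :=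
    MapClusterPt.continuousAt_comp F.continuous.continuousAt hx
  exact eq_of_nhds_neBot (ClusterPt.mono hFx hA)

variable [Nonempty X]

lemma exists_eq_iSup_continuousMap (F : C(X, ℝ)) : ∃ x, F x = ⨆ z, F z := by
  obtain ⟨x, -, hx⟩ := isCompact_univ.exists_isMaxOn univ_nonempty F.continuous.continuousOn
  exact ⟨x, le_antisymm (le_iSup_continuousMap F x) (ciSup_le fun z => hx (mem_univ z))⟩

lemma lipschitzWith_iSup_continuousMap : LipschitzWith 1 fun F : C(X, ℝ) => ⨆ x, F x := by
  refine LipschitzWith.of_le_add fun F G => ciSup_le fun x => ?_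
  have hFG : F x - G x ≤ dist F G := (le_abs_self _).trans (F.dist_apply_le_dist x)
  linarith [le_iSup_continuousMap G x]

/-- Danskin's envelope formula. -/
lemma hasDerivAt_iSup_add_smul {F : C(X, ℝ)} {a : X} (ha : ∀ x, F x = ⨆ z, F z → x = a)
    (h : C(X, ℝ)) : HasDerivAt (fun t : ℝ => ⨆ x, (F + t • h) x) (h a) 0 := by
  set M : ℝ → ℝ := fun t => ⨆ x, (F + t • h) x with hM
  have hM0 : M 0 = ⨆ x, F x := by simp [hM]
  have haM : F a = M 0 := by
    obtain ⟨x, hx⟩ := exists_eq_iSup_continuousMap F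
    rw [hM0, ← ha x hx, hx]
  choose A hA using fun t : ℝ => exists_eq_iSup_continuousMap (F + t • h)
  have hMA (t : ℝ) : M t = F (A t) + t * h (A t) := (hA t).symm
  have hlower (t : ℝ) : t * h a ≤ M t - M 0 := by
    have : F a + t * h a ≤ M t := le_iSup_continuousMap (F + t • h) a
    linarith
  have hupper (t : ℝ) : M t - M 0 ≤ t * h (A t) := by
    linarith [hMA t, le_iSup_continuousMap F (A t)]
  have hMcont : Continuous M :=
    lipschitzWith_iSup_continuousMap.continuous.comp
      (continuous_const.add (continuous_id.smul continuous_const))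
  have hAa : Tendsto A (𝓝 0) (𝓝 a) := by
    refine tendsto_of_tendsto_iSup_of_unique ha ?_
    have hth : Tendsto (fun t => t * h (A t)) (𝓝 0) (𝓝 0) := by
      refine squeeze_zero_norm (a := fun t => |t| * ‖h‖) (fun t => ?_) ?_
      · rw [norm_mul, Real.norm_eq_abs]
        gcongr
        exact h.norm_coe_le_norm _
      · exact ((continuous_abs.mul continuous_const).tendsto' 0 0 (by simp))
    rw [← hM0]
    simpa [hMA] using! (hMcont.tendsto 0).sub hth
  have hsmall : (fun t => t * (h (A t) - h a)) =o[𝓝 0] fun t => t := by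
    have hhA : (fun t => h (A t) - h a) =o[𝓝 0] fun _ => (1 : ℝ) := by
      rw [Asymptotics.isLittleO_one_iff]
      simpa using ((h.continuous.tendsto a).comp hAa).sub_const (h a)
    simpa using (Asymptotics.isBigO_refl (fun t : ℝ => t) (𝓝 0)).mul_isLittleO hhA
  rw [hasDerivAt_iff_isLittleO]
  simp only [sub_zero, smul_eq_mul]
  refine (Asymptotics.IsBigO.of_norm_le fun t => ?_).trans_isLittleO hsmall
  rw [Real.norm_eq_abs, abs_of_nonneg (by linarith [hlower t])]
  linarith [hupper t]

end Supremum

section NormalizedPotentials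

variable {X Y : Type*} [TopologicalSpace X] [TopologicalSpace Y] [CompactSpace Y]

/-- The potentials that inherit the modulus of continuity of the cost, normalised at `x₀`. -/
def normalizedPotentials (c : C(Y × X, ℝ)) (x₀ : X) : Set C(X, ℝ) :=
  {g | (∀ x x', dist (g x) (g x') ≤
    dist ((c.comp .prodSwap).curry x) ((c.comp .prodSwap).curry x')) ∧ g x₀ = 0}

lemma isCompact_normalizedPotentials (c : C(Y × X, ℝ)) (x₀ : X) :
    IsCompact (normalizedPotentials c x₀) := by
  set cX : C(X, C(Y, ℝ)) := (c.comp .prodSwap).curry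
  apply ArzelaAscoli.isCompact_of_equicontinuous
  · have himage : ContinuousMap.toFun '' normalizedPotentials c x₀ =
        {F : X → ℝ | (∀ x x', dist (F x) (F x') ≤ dist (cX x) (cX x')) ∧ F x₀ = 0} := by
      refine Subset.antisymm (image_subset_iff.2 fun g hg => hg) fun F hF => ?_
      have hFcont : Continuous F := continuous_iff_continuousAt.2 fun x =>
        tendsto_iff_dist_tendsto_zero.2 <| squeeze_zero (fun _ => dist_nonneg) (fun z => hF.1 z x)
          (tendsto_iff_dist_tendsto_zero.1 (cX.continuous.tendsto x))
      exact ⟨⟨F, hFcont⟩, hF, rfl⟩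
    rw [himage]
    refine (isCompact_univ_pi fun x =>
      isCompact_closedBall (0 : ℝ) (dist (cX x) (cX x₀))).of_isClosed_subset ?_ fun F hF x _ => ?_
    · simp only [ofPred_and, ofPred_forall]
      exact (isClosed_iInter fun x => isClosed_iInter fun x' =>
        isClosed_le (by fun_prop) continuous_const).inter
          (isClosed_eq (by fun_prop) continuous_const)
    · simpa [hF.2] using hF.1 x x₀
  · intro x
    refine Metric.equicontinuousAt_of_continuity_modulus (fun x' => dist (cX x) (cX x')) ?_ _
      (Eventually.of_forall fun x' g => g.2.1 x x')
    exact ((continuous_const.dist cX.continuous).tendsto' x 0 (dist_self _))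

end NormalizedPotentials

section CTransform

variable {X Y : Type*} [TopologicalSpace X] [CompactSpace X] [Nonempty X] [TopologicalSpace Y]

/-- The `c`-transform `y ↦ sup_x (f x - c (y, x))` of optimal transport, for a continuous cost `c`
and with the sign convention that makes it monotone in the potential `f`. -/
def cTransform (c : C(Y × X, ℝ)) (f : C(X, ℝ)) : C(Y, ℝ) where
  toFun y := ⨆ x, (f - c.curry y) x
  continuous_toFun := lipschitzWith_iSup_continuousMap.continuous.comp
    (continuous_const.sub c.curry.continuous)

variable (c : C(Y × X, ℝ))

lemma sub_le_cTransform (f : C(X, ℝ)) (y : Y) (x : X) : f x - c (y, x) ≤ cTransform c f y :=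
  le_iSup_continuousMap (f - c.curry y) x

lemma exists_eq_cTransform (f : C(X, ℝ)) (y : Y) : ∃ x, f x - c (y, x) = cTransform c f y :=
  exists_eq_iSup_continuousMap (f - c.curry y)

lemma cTransform_le {f : C(X, ℝ)} {y : Y} {b : ℝ} (h : ∀ x, f x - c (y, x) ≤ b) :
    cTransform c f y ≤ b :=
  ciSup_le h

lemma cTransform_add_const (f : C(X, ℝ)) (k : ℝ) :
    cTransform c (f + .const X k) = cTransform c f + .const Y k := by
  ext y
  calc ⨆ x, (f + .const X k - c.curry y) x = ⨆ x, ((f - c.curry y) x + k) := by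
        congr! 2 with x
        simp only [ContinuousMap.sub_apply, ContinuousMap.add_apply, ContinuousMap.const_apply]
        ring
    _ = (⨆ x, (f - c.curry y) x) + k :=
        (ciSup_add (isCompact_range (f - c.curry y).continuous).bddAbove k).symm

lemma dist_cTransform_apply_le (f g : C(X, ℝ)) (y : Y) :
    dist (cTransform c f y) (cTransform c g y) ≤ dist f g := by
  refine (lipschitzWith_iSup_continuousMap.dist_le_mul (f - c.curry y) (g - c.curry y)).trans ?_
  simp only [NNReal.coe_one, one_mul, dist_sub_right, le_refl]

lemma lipschitzWith_cTransform [CompactSpace Y] : LipschitzWith 1 (cTransform c) :=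
  LipschitzWith.mk_one fun f g =>
    (ContinuousMap.dist_le dist_nonneg).2 (dist_cTransform_apply_le c f g)

lemma dist_cTransform_le_dist_curry (f : C(X, ℝ)) (y y' : Y) :
    dist (cTransform c f y) (cTransform c f y') ≤ dist (c.curry y) (c.curry y') := by
  refine (lipschitzWith_iSup_continuousMap.dist_le_mul (f - c.curry y) (f - c.curry y')).trans ?_
  simp only [NNReal.coe_one, one_mul, dist_sub_left, le_refl]

lemma hasDerivAt_cTransform {f : C(X, ℝ)} {y : Y} {a : X}
    (ha : ∀ x, f x - c (y, x) = cTransform c f y → x = a) (h : C(X, ℝ)) :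
    HasDerivAt (fun t : ℝ => cTransform c (f + t • h) y) (h a) 0 := by
  convert hasDerivAt_iSup_add_smul (F := f - c.curry y) ha h using 2 with t
  rw [sub_add_eq_add_sub]
  rfl

lemma lipschitzOnWith_exp_Iic (R : ℝ) :
    LipschitzOnWith (Real.nnabs (Real.exp R)) Real.exp (Iic R) := by
  refine (convex_Iic R).lipschitzOnWith_of_nnnorm_deriv_le
    (fun x _ => Real.differentiableAt_exp) fun x hx => ?_
  rw [Real.deriv_exp, ← NNReal.coe_le_coe, coe_nnnorm, Real.coe_nnabs, Real.norm_eq_abs,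
    Real.abs_exp, Real.abs_exp]
  exact Real.exp_le_exp.2 hx

lemma lipschitzWith_cTransform_add_smul_apply (f h : C(X, ℝ)) (y : Y) :
    LipschitzWith ‖h‖₊ fun t : ℝ => cTransform c (f + t • h) y := by
  refine LipschitzWith.of_dist_le_mul fun t t' => ?_
  refine (dist_cTransform_apply_le c _ _ y).trans_eq ?_
  rw [dist_add_left, dist_eq_norm, ← sub_smul, norm_smul, dist_eq_norm, coe_nnnorm, mul_comm]

lemma lipschitzOnWith_exp_mul_cTransform_add_smul [CompactSpace Y] (s : ℝ) (f h : C(X, ℝ)) :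
    ∃ K : ℝ, ∀ y, LipschitzOnWith (Real.nnabs K)
      (fun t : ℝ => Real.exp (s * cTransform c (f + t • h) y)) (Metric.ball 0 1) := by
  set R := |s| * (‖cTransform c f‖ + ‖h‖)
  have hlip (y : Y) : LipschitzWith (‖s‖₊ * ‖h‖₊) fun t : ℝ => s * cTransform c (f + t • h) y :=
    (lipschitzWith_smul s).comp (lipschitzWith_cTransform_add_smul_apply c f h y)
  have hmaps (y : Y) :
      MapsTo (fun t : ℝ => s * cTransform c (f + t • h) y) (Metric.ball 0 1) (Iic R) := by
    intro t ht
    have hF : |cTransform c (f + t • h) y| ≤ ‖cTransform c f‖ + ‖h‖ := by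
      have hdist := (lipschitzWith_cTransform_add_smul_apply c f h y).dist_le_mul t 0
      rw [Real.dist_eq, dist_zero_right, zero_smul, add_zero, coe_nnnorm] at hdist
      have hth : ‖h‖ * ‖t‖ ≤ ‖h‖ :=
        mul_le_of_le_one_right (norm_nonneg h) (mem_ball_zero_iff.1 ht).le
      have := (cTransform c f).norm_coe_le_norm y
      rw [Real.norm_eq_abs] at this
      linarith [abs_sub_abs_le_abs_sub (cTransform c (f + t • h) y) (cTransform c f y)]
    calc s * cTransform c (f + t • h) y ≤ |s| * |cTransform c (f + t • h) y| :=
          (le_abs_self _).trans_eq (abs_mul _ _)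
      _ ≤ R := mul_le_mul_of_nonneg_left hF (abs_nonneg s)
  refine ⟨Real.exp R * (|s| * ‖h‖), fun y => ?_⟩
  have hK : Real.nnabs (Real.exp R * (|s| * ‖h‖)) = Real.nnabs (Real.exp R) * (‖s‖₊ * ‖h‖₊) := by
    ext
    simp
  rw [hK]
  exact (lipschitzOnWith_exp_Iic R).comp (hlip y).lipschitzOnWith (hmaps y)

variable [CompactSpace Y] [Nonempty Y]

/-- The witness is the double `c`-transform of `f`. -/
lemma exists_normalizedPotential_le (f : C(X, ℝ)) (x₀ : X) :
    ∃ g ∈ normalizedPotentials c x₀, ∃ k : ℝ, f ≤ g + .const X k ∧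
      cTransform c (g + .const X k) ≤ cTransform c f := by
  set G : C(X, ℝ) := -cTransform (c.comp .prodSwap) (-cTransform c f) with hG
  refine ⟨G + .const X (-G x₀), ⟨fun x x' => ?_, by simp⟩, G x₀, ?_⟩
  · simpa [hG] using dist_cTransform_le_dist_curry (c.comp .prodSwap) (-cTransform c f) x x'
  · have hcancel : G + .const X (-G x₀) + .const X (G x₀) = G := by ext; simp
    rw [hcancel]
    refine ⟨ContinuousMap.le_def.2 fun x => ?_,
      ContinuousMap.le_def.2 fun y => cTransform_le c fun x => ?_⟩
    · refine le_neg_of_le_neg (cTransform_le _ fun y => ?_)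
      have := sub_le_cTransform c f y x
      simp only [ContinuousMap.neg_apply, ContinuousMap.comp_apply, ContinuousMap.prodSwap_apply]
      linarith
    · have := sub_le_cTransform (c.comp .prodSwap) (-cTransform c f) x y
      simp only [hG, ContinuousMap.neg_apply, ContinuousMap.comp_apply,
        ContinuousMap.prodSwap_apply] at this ⊢
      linarith

end CTransform

section IntegralContinuousMap

variable {X : Type*} [TopologicalSpace X] [CompactSpace X] [MeasurableSpace X] [BorelSpace X]
  (μ : Measure X) [IsFiniteMeasure μ]

lemma integrable_continuousMap (F : C(X, ℝ)) : Integrable F μ :=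
  F.continuous.integrable_of_hasCompactSupport (.of_compactSpace F)

lemma continuous_integral_continuousMap : Continuous fun F : C(X, ℝ) => ∫ x, F x ∂μ := by
  refine (LipschitzWith.of_dist_le_mul (K := (μ univ).toNNReal) fun F G => ?_).continuous
  rw [dist_eq_norm, ← integral_sub (integrable_continuousMap μ F) (integrable_continuousMap μ G),
    mul_comm]
  exact norm_integral_le_of_norm_le_const (ae_of_all _ fun x => F.dist_apply_le_dist x)

lemma integrable_exp_mul_continuousMap (s : ℝ) (F : C(X, ℝ)) :
    Integrable (fun x => Real.exp (s * F x)) μ :=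
  integrable_continuousMap μ ⟨fun x => Real.exp (s * F x), by fun_prop⟩

lemma mgf_continuousMap_pos [NeZero μ] (s : ℝ) (F : C(X, ℝ)) : 0 < mgf F μ s :=
  mgf_pos' (NeZero.ne μ) (integrable_exp_mul_continuousMap μ s F)

lemma continuous_cgf_continuousMap [NeZero μ] (s : ℝ) :
    Continuous fun F : C(X, ℝ) => cgf F μ s := by
  have hmgf : Continuous fun F : C(X, ℝ) => mgf F μ s :=
    (continuous_integral_continuousMap μ).comp
      (ContinuousMap.continuous_postcomp ⟨fun r => Real.exp (s * r), by fun_prop⟩)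
  exact hmgf.log fun F => (mgf_continuousMap_pos μ s F).ne'

end IntegralContinuousMap

section CgfCTransform

variable {X Y : Type*} [TopologicalSpace X] [CompactSpace X] [Nonempty X]
  [TopologicalSpace Y] [CompactSpace Y] [MeasurableSpace Y] [BorelSpace Y]
  (c : C(Y × X, ℝ)) {s : ℝ} (σ : Measure Y) [IsFiniteMeasure σ]

lemma cgf_cTransform_add_const [NeZero σ] (f : C(X, ℝ)) (k : ℝ) :
    cgf (cTransform c (f + .const X k)) σ s = cgf (cTransform c f) σ s + s * k := by
  have hmgf : mgf (cTransform c (f + .const X k)) σ s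
      = mgf (cTransform c f) σ s * Real.exp (s * k) := by
    rw [cTransform_add_const]
    exact mgf_add_const k
  rw [cgf, hmgf, Real.log_mul (mgf_continuousMap_pos σ s _).ne' (Real.exp_pos _).ne', Real.log_exp,
    cgf]

lemma hasDerivAt_mgf_cTransform [MeasurableSpace X] [OpensMeasurableSpace X]
    {f : C(X, ℝ)} {a : Y → X} (ham : AEMeasurable a σ)
    (ha : ∀ᵐ y ∂σ, ∀ x, f x - c (y, x) = cTransform c f y → x = a y) (h : C(X, ℝ)) :
    HasDerivAt (fun t : ℝ => mgf (cTransform c (f + t • h)) σ s)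
      (∫ y, Real.exp (s * cTransform c f y) * (s * h (a y)) ∂σ) 0 := by
  obtain ⟨K, hK⟩ := lipschitzOnWith_exp_mul_cTransform_add_smul c s f h
  have hint (t : ℝ) := integrable_exp_mul_continuousMap σ s (cTransform c (f + t • h))
  refine (hasDerivAt_integral_of_dominated_loc_of_lip (bound := fun _ => K)
    (Metric.ball_mem_nhds _ one_pos) (Eventually.of_forall fun t => (hint t).1) (hint 0) ?_
    (ae_of_all _ hK) (integrable_const K) ?_).2
  · have hha : AEMeasurable (fun y => s * h (a y)) σ :=
      (h.continuous.measurable.comp_aemeasurable ham).const_mul s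
    exact (integrable_exp_mul_continuousMap σ s (cTransform c f)).1.mul hha.aestronglyMeasurable
  · filter_upwards [ha] with y hy
    simpa using! ((hasDerivAt_cTransform c hy h).const_mul s).exp

end CgfCTransform

section DualFunctional

variable {X Y : Type*} [TopologicalSpace X] [CompactSpace X] [Nonempty X]
  [MeasurableSpace X] [BorelSpace X]
  [TopologicalSpace Y] [CompactSpace Y] [MeasurableSpace Y] [BorelSpace Y]
  (c : C(Y × X, ℝ)) {s : ℝ} (σ : Measure Y) [IsFiniteMeasure σ] (φ : Measure X) [IsFiniteMeasure φ]

/-- The functional `f ↦ ∫ f dφ - (φ(X) / s) log ∫ exp (s f^c) dσ`, `f^c` being the `c`-transform: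
a Kantorovich dual functional whose Euler–Lagrange equation says that the argmax map pushes
`exp (s f^c) dσ` forward to a multiple of `φ`. -/
def dualFunctional (c : C(Y × X, ℝ)) (s : ℝ) (σ : Measure Y) (φ : Measure X) (f : C(X, ℝ)) : ℝ :=
  ∫ x, f x ∂φ - φ.real univ / s * cgf (cTransform c f) σ s

lemma dualFunctional_add_const [NeZero σ] (hs : s ≠ 0) (f : C(X, ℝ)) (k : ℝ) :
    dualFunctional c s σ φ (f + .const X k) = dualFunctional c s σ φ f := by
  have hint : ∫ x, (f + .const X k : C(X, ℝ)) x ∂φ = ∫ x, f x ∂φ + φ.real univ * k := by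
    simpa using! integral_add (integrable_continuousMap φ f) (integrable_const k)
  rw [dualFunctional, hint, cgf_cTransform_add_const, dualFunctional]
  field_simp
  ring

variable {c} in
lemma dualFunctional_le_of_le [NeZero σ] (hs : 0 < s) {f g : C(X, ℝ)} (hfg : f ≤ g)
    (hc : cTransform c g ≤ cTransform c f) :
    dualFunctional c s σ φ f ≤ dualFunctional c s σ φ g := by
  have hint : ∫ x, f x ∂φ ≤ ∫ x, g x ∂φ :=
    integral_mono (integrable_continuousMap φ f) (integrable_continuousMap φ g) hfg
  have hcgf : cgf (cTransform c g) σ s ≤ cgf (cTransform c f) σ s :=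
    Real.log_le_log (mgf_continuousMap_pos σ s _) <|
      mgf_mono_of_nonneg (ae_of_all _ hc) hs.le (integrable_exp_mul_continuousMap σ s _)
  unfold dualFunctional
  gcongr

lemma continuous_dualFunctional [NeZero σ] : Continuous (dualFunctional c s σ φ) :=
  (continuous_integral_continuousMap φ).sub <| continuous_const.mul <|
    (continuous_cgf_continuousMap σ s).comp (lipschitzWith_cTransform c).continuous

lemma exists_forall_dualFunctional_le [NeZero σ] (hs : 0 < s) :
    ∃ f, ∀ g, dualFunctional c s σ φ g ≤ dualFunctional c s σ φ f := by
  have : Nonempty Y := σ.nonempty_of_neZero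
  obtain ⟨x₀⟩ := ‹Nonempty X›
  obtain ⟨g₀, hg₀, -⟩ := exists_normalizedPotential_le c 0 x₀
  obtain ⟨f, -, hf⟩ := (isCompact_normalizedPotentials c x₀).exists_isMaxOn ⟨g₀, hg₀⟩
    (continuous_dualFunctional c (s := s) σ φ).continuousOn
  refine ⟨f, fun g => ?_⟩
  obtain ⟨G, hG, k, hgG, hGc⟩ := exists_normalizedPotential_le c g x₀
  calc dualFunctional c s σ φ g ≤ dualFunctional c s σ φ (G + .const X k) :=
        dualFunctional_le_of_le σ φ hs hgG hGc
    _ = dualFunctional c s σ φ G := dualFunctional_add_const c σ φ hs.ne' G k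
    _ ≤ dualFunctional c s σ φ f := hf hG

lemma exists_maximizer_mgf_eq [NeZero σ] [NeZero φ] (hs : 0 < s) :
    ∃ f, (∀ g, dualFunctional c s σ φ g ≤ dualFunctional c s σ φ f) ∧
      mgf (cTransform c f) σ s = φ.real univ := by
  obtain ⟨f, hf⟩ := exists_forall_dualFunctional_le c σ φ hs
  set k := (Real.log (φ.real univ) - cgf (cTransform c f) σ s) / s
  refine ⟨f + .const X k, fun g => (hf g).trans (dualFunctional_add_const c σ φ hs.ne' f k).ge, ?_⟩
  apply Real.log_injOn_pos (mgf_continuousMap_pos σ s _) measureReal_univ_pos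
  change cgf _ σ s = _
  rw [cgf_cTransform_add_const, mul_div_cancel₀ _ hs.ne', add_sub_cancel]

variable {σ φ} in
lemma integral_eq_of_forall_dualFunctional_le [NeZero σ] [NeZero φ] (hs : s ≠ 0) {f : C(X, ℝ)}
    (hf : ∀ g, dualFunctional c s σ φ g ≤ dualFunctional c s σ φ f)
    (hmass : mgf (cTransform c f) σ s = φ.real univ) {a : Y → X} (ham : AEMeasurable a σ)
    (ha : ∀ᵐ y ∂σ, ∀ x, f x - c (y, x) = cTransform c f y → x = a y) (h : C(X, ℝ)) :
    ∫ x, h x ∂φ = ∫ y, Real.exp (s * cTransform c f y) * h (a y) ∂σ := by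
  have hφ : φ.real univ ≠ 0 := measureReal_univ_pos.ne'
  have hlin : HasDerivAt (fun t : ℝ => ∫ x, (f + t • h) x ∂φ) (∫ x, h x ∂φ) 0 := by
    have heq (t : ℝ) : ∫ x, (f + t • h) x ∂φ = ∫ x, f x ∂φ + t * ∫ x, h x ∂φ := by
      rw [← integral_const_mul]
      exact integral_add (integrable_continuousMap φ f) ((integrable_continuousMap φ h).const_mul t)
    simp only [heq]
    simpa using ((hasDerivAt_id (0 : ℝ)).mul_const (∫ x, h x ∂φ)).const_add (∫ x, f x ∂φ)
  have hmgf := hasDerivAt_mgf_cTransform c (s := s) σ ham ha h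
  have hcgf := hmgf.log (by simpa [hmass] using hφ)
  have hderiv := hlin.sub (hcgf.const_mul (φ.real univ / s))
  have hmax : IsLocalMax (fun t : ℝ => dualFunctional c s σ φ (f + t • h)) 0 :=
    Eventually.of_forall fun t => by simpa using hf (f + t • h)
  have hzero := hmax.hasDerivAt_eq_zero hderiv
  simp only [zero_smul, add_zero, hmass, mul_left_comm _ s, integral_const_mul] at hzero
  field_simp at hzero
  linarith

lemma exists_forall_eq_map_withDensity [HasOuterApproxClosed X] [NeZero σ] [NeZero φ]
    (hs : 0 < s) :
    ∃ f : C(X, ℝ), ∀ a : Y → X, AEMeasurable a σ →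
      (∀ᵐ y ∂σ, ∀ x, f x - c (y, x) = cTransform c f y → x = a y) →
      φ = (σ.withDensity fun y => .ofReal (Real.exp (s * cTransform c f y))).map a := by
  obtain ⟨f, hf, hmass⟩ := exists_maximizer_mgf_eq c σ φ hs
  refine ⟨f, fun a ham ha => ?_⟩
  set d : Y → ℝ≥0∞ := fun y => .ofReal (Real.exp (s * cTransform c f y))
  have hd : Measurable d := by fun_prop
  have : IsFiniteMeasure (σ.withDensity d) :=
    isFiniteMeasure_withDensity_ofReal (integrable_exp_mul_continuousMap σ s _).2
  refine ext_of_forall_integral_eq_of_IsFiniteMeasure fun h => ?_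
  rw [integral_map (ham.mono_ac (withDensity_absolutelyContinuous σ d))
    h.continuous.measurable.aestronglyMeasurable,
    integral_withDensity_eq_integral_toReal_smul hd (ae_of_all _ fun _ => ENNReal.ofReal_lt_top)]
  simpa [d, ENNReal.toReal_ofReal (Real.exp_pos _).le] using
    integral_eq_of_forall_dualFunctional_le c hs.ne' hf hmass ham ha h.toContinuousMap

end DualFunctional

section WulffGauge

variable {E : Type*} [NormedAddCommGroup E] [InnerProductSpace ℝ E] {ϖ : Set E} {g : E → ℝ}

/-- A nonempty compact set `ϖ` with a positive continuous function on it: the data of a Wulff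
shape. -/
structure IsWulffDatum (ϖ : Set E) (g : E → ℝ) : Prop where
  isCompact : IsCompact ϖ
  nonempty : ϖ.Nonempty
  continuousOn : ContinuousOn g ϖ
  pos : ∀ u ∈ ϖ, 0 < g u

/-- The concave gauge of a Wulff shape: the Wulff shape is the part of the cone where it is at
least `1`, so on the cone it is the reciprocal of the radial function. -/
def wulffGauge (ϖ : Set E) (g : E → ℝ) (y : E) : ℝ := ⨅ u : ϖ, -⟪y, (u : E)⟫ / g u

lemma wulffGauge_smul {t : ℝ} (ht : 0 ≤ t) (y : E) :
    wulffGauge ϖ g (t • y) = t * wulffGauge ϖ g y := by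
  simp only [wulffGauge, Real.mul_iInf_of_nonneg ht, real_inner_smul_left]
  congr! 2
  ring

lemma differentiableAt_wulffGauge_smul {t : ℝ} (ht : 0 < t) {y : E} :
    DifferentiableAt ℝ (wulffGauge ϖ g) (t • y) ↔ DifferentiableAt ℝ (wulffGauge ϖ g) y := by
  have hsmul {r : ℝ} (hr : 0 < r) {z : E} (hz : DifferentiableAt ℝ (wulffGauge ϖ g) (r • z)) :
      DifferentiableAt ℝ (wulffGauge ϖ g) z := by
    have hcomp : DifferentiableAt ℝ (fun z => r⁻¹ * wulffGauge ϖ g (r • z)) z :=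
      (hz.comp z (differentiableAt_id.const_smul r)).const_mul r⁻¹
    simpa only [wulffGauge_smul hr.le, inv_mul_cancel_left₀ hr.ne'] using hcomp
  refine ⟨hsmul ht, fun hy => hsmul (inv_pos.2 ht) ?_⟩
  rwa [inv_smul_smul₀ ht.ne']

namespace IsWulffDatum

lemma isLeast_wulffGauge (h : IsWulffDatum ϖ g) (y : E) :
    IsLeast ((fun u => -⟪y, u⟫ / g u) '' ϖ) (wulffGauge ϖ g y) := by
  have hcont : ContinuousOn (fun u => -⟪y, u⟫ / g u) ϖ :=
    (by fun_prop : Continuous fun u => -⟪y, u⟫).continuousOn.div h.continuousOn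
      fun u hu => (h.pos u hu).ne'
  rw [wulffGauge, ← sInf_image' (s := ϖ) (f := fun u => -⟪y, u⟫ / g u)]
  exact (h.isCompact.image_of_continuousOn hcont).isLeast_sInf (h.nonempty.image _)

lemma wulffGauge_le (h : IsWulffDatum ϖ g) (y : E) {u : E} (hu : u ∈ ϖ) :
    wulffGauge ϖ g y ≤ -⟪y, u⟫ / g u :=
  (h.isLeast_wulffGauge y).2 (mem_image_of_mem _ hu)

lemma exists_eq_wulffGauge (h : IsWulffDatum ϖ g) (y : E) :
    ∃ u ∈ ϖ, -⟪y, u⟫ / g u = wulffGauge ϖ g y :=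
  (h.isLeast_wulffGauge y).1

lemma one_le_wulffGauge_iff (h : IsWulffDatum ϖ g) {y : E} :
    1 ≤ wulffGauge ϖ g y ↔ ∀ u ∈ ϖ, ⟪y, u⟫ ≤ -g u := by
  rw [le_isGLB_iff (h.isLeast_wulffGauge y).isGLB, mem_lowerBounds, forall_mem_image]
  exact forall₂_congr fun u hu => by rw [one_le_div (h.pos u hu), le_neg]

lemma wulffGauge_pos (h : IsWulffDatum ϖ g) {y : E} (hy : ∀ u ∈ ϖ, ⟪y, u⟫ < 0) :
    0 < wulffGauge ϖ g y := by
  obtain ⟨u, hu, heq⟩ := h.exists_eq_wulffGauge y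
  exact heq ▸ div_pos (neg_pos.2 (hy u hu)) (h.pos u hu)

lemma exists_lipschitzWith_wulffGauge (h : IsWulffDatum ϖ g) :
    ∃ L, LipschitzWith L (wulffGauge ϖ g) := by
  obtain ⟨R, hR⟩ := h.isCompact.exists_bound_of_continuousOn
    ((continuousOn_id.norm).div h.continuousOn fun u hu => (h.pos u hu).ne')
  refine ⟨R.toNNReal, LipschitzWith.of_le_add_mul _ fun x y => ?_⟩
  obtain ⟨u, hu, heq⟩ := h.exists_eq_wulffGauge y
  have hgu := h.pos u hu
  calc wulffGauge ϖ g x ≤ -⟪x, u⟫ / g u := h.wulffGauge_le x hu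
    _ = -⟪y, u⟫ / g u + ⟪y - x, u⟫ / g u := by rw [inner_sub_left]; ring
    _ ≤ -⟪y, u⟫ / g u + ‖y - x‖ * ‖u‖ / g u := by gcongr; exact real_inner_le_norm _ _
    _ = wulffGauge ϖ g y + ‖‖u‖ / g u‖ * dist x y := by
        rw [heq, dist_comm, dist_eq_norm, norm_div, norm_norm, Real.norm_of_nonneg hgu.le]
        ring
    _ ≤ wulffGauge ϖ g y + R.toNNReal * dist x y := by
        gcongr
        exact (hR u hu).trans (Real.le_coe_toNNReal R)

lemma continuous_wulffGauge (h : IsWulffDatum ϖ g) : Continuous (wulffGauge ϖ g) :=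
  let ⟨_, hL⟩ := h.exists_lipschitzWith_wulffGauge
  hL.continuous

end IsWulffDatum

variable [CompleteSpace E]

lemma eq_of_hasGradientAt_of_isLocalExtr_sub_inner {f : E → ℝ} {f' w x : E}
    (hf : HasGradientAt f f' x) (hx : IsLocalExtr (fun z => f z - ⟪w, z⟫) x) : f' = w := by
  have hderiv := hf.hasFDerivAt.sub (innerSL ℝ w).hasFDerivAt
  have hzero := hx.hasFDerivAt_eq_zero hderiv
  rw [sub_eq_zero] at hzero
  exact (InnerProductSpace.toDual ℝ E).injective hzero

lemma gradient_wulffGauge_smul {t : ℝ} (ht : 0 < t) (y : E) :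
    gradient (wulffGauge ϖ g) (t • y) = gradient (wulffGauge ϖ g) y := by
  have hfderiv : t • fderiv ℝ (wulffGauge ϖ g) (t • y) = t • fderiv ℝ (wulffGauge ϖ g) y := by
    have hscale : (fun z => wulffGauge ϖ g (t • z)) = t • wulffGauge ϖ g :=
      funext fun z => wulffGauge_smul ht.le z
    rw [← fderiv_comp_smul, hscale, fderiv_const_smul_field, Pi.smul_apply]
  rw [gradient, gradient, smul_right_injective _ ht.ne' hfderiv]

lemma IsWulffDatum.gradient_wulffGauge (h : IsWulffDatum ϖ g) {y u : E}
    (hd : DifferentiableAt ℝ (wulffGauge ϖ g) y) (hu : u ∈ ϖ)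
    (heq : -⟪y, u⟫ / g u = wulffGauge ϖ g y) :
    gradient (wulffGauge ϖ g) y = -((g u)⁻¹ • u) := by
  have hw (z : E) : ⟪-((g u)⁻¹ • u), z⟫ = -⟪z, u⟫ / g u := by
    rw [inner_neg_left, real_inner_smul_left, real_inner_comm]
    ring
  refine eq_of_hasGradientAt_of_isLocalExtr_sub_inner hd.hasGradientAt
    (.inr (Eventually.of_forall fun z => ?_))
  simp only [hw, heq, sub_self]
  exact sub_nonpos.2 (h.wulffGauge_le z hu)

/-- The outer unit normal of a Wulff shape at the boundary point on the ray through `y`, read off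
from the gradient of the gauge. -/
def wulffNormal (ϖ : Set E) (g : E → ℝ) (y : E) : E :=
  -(‖gradient (wulffGauge ϖ g) y‖⁻¹ • gradient (wulffGauge ϖ g) y)

lemma wulffNormal_smul {t : ℝ} (ht : 0 < t) (y : E) :
    wulffNormal ϖ g (t • y) = wulffNormal ϖ g y := by
  rw [wulffNormal, gradient_wulffGauge_smul ht, wulffNormal]

lemma measurable_wulffNormal [MeasurableSpace E] [BorelSpace E] [SecondCountableTopology E] :
    Measurable (wulffNormal ϖ g) := by
  have hgrad : Measurable (gradient (wulffGauge ϖ g)) :=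
    (InnerProductSpace.toDual ℝ E).symm.continuous.measurable.comp
      (measurable_fderiv ℝ (wulffGauge ϖ g))
  exact (hgrad.norm.inv.smul hgrad).neg

lemma IsWulffDatum.wulffNormal_eq (h : IsWulffDatum ϖ g) {y u : E}
    (hd : DifferentiableAt ℝ (wulffGauge ϖ g) y) (hu : u ∈ ϖ) (hu1 : ‖u‖ = 1)
    (heq : -⟪y, u⟫ / g u = wulffGauge ϖ g y) : wulffNormal ϖ g y = u := by
  have hgu := h.pos u hu
  rw [wulffNormal, h.gradient_wulffGauge hd hu heq, norm_neg, norm_smul, hu1, mul_one,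
    Real.norm_of_nonneg (inv_pos.2 hgu).le, smul_neg, neg_neg, inv_inv,
    smul_inv_smul₀ hgu.ne']

end WulffGauge

section Cone

variable {n : ℕ} {C : Set (En n)}

lemma inner_neg_of_mem_interior_dualCone {x u : En n} (hx : x ∈ C) (hx0 : x ≠ 0)
    (hu : u ∈ interior (dualCone n C)) : ⟪x, u⟫ < 0 := by
  have hopen : IsOpenMap (innerSL ℝ x) :=
    (innerSL ℝ x).isOpenMap_of_ne_zero fun h =>
      hx0 (innerSL_inj.1 (h.trans (map_zero (innerSL ℝ)).symm))
  have hsub : dualCone n C ⊆ innerSL ℝ x ⁻¹' Iic 0 := fun z hz => by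
    simpa only [mem_preimage, innerSL_apply_apply, mem_Iic, real_inner_comm] using hz x hx
  have hmem := interior_mono hsub hu
  rwa [← hopen.preimage_interior_eq_interior_preimage (innerSL ℝ x).continuous, interior_Iic]
    at hmem

namespace IsGoodCone

lemma smul_mem (hC : IsGoodCone n C) {x : En n} (hx : x ∈ C) {t : ℝ} (ht : 0 ≤ t) : t • x ∈ C :=
  hC.2.2.1 x hx t ht

lemma add_mem (hC : IsGoodCone n C) {x y : En n} (hx : x ∈ C) (hy : y ∈ C) : x + y ∈ C := by
  have hmid := hC.smul_mem (hC.2.1.midpoint_mem hx hy) zero_le_two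
  rwa [midpoint_eq_smul_add, invOf_eq_inv, smul_inv_smul₀ two_ne_zero] at hmid

lemma smul_mem_interior (hC : IsGoodCone n C) {x : En n} (hx : x ∈ interior C) {t : ℝ}
    (ht : 0 < t) : t • x ∈ interior C := by
  have hsub : t • C ⊆ C := smul_set_subset_iff.2 fun y hy => hC.smul_mem hy ht.le
  have hmono := interior_mono hsub
  rw [interior_smul₀ ht.ne'] at hmono
  exact hmono (smul_mem_smul_set hx)

lemma smul_mem_iff (hC : IsGoodCone n C) {x : En n} {t : ℝ} (ht : 0 < t) :
    t • x ∈ C ↔ x ∈ C := by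
  refine ⟨fun h => ?_, fun h => hC.smul_mem h ht.le⟩
  simpa only [inv_smul_smul₀ ht.ne'] using hC.smul_mem h (inv_pos.2 ht).le

lemma exists_mem_interior_ne_zero [Nontrivial (En n)] (hC : IsGoodCone n C) :
    ∃ x ∈ interior C, x ≠ 0 :=
  (dense_compl_singleton (0 : En n)).inter_open_nonempty _ isOpen_interior hC.2.2.2.2

lemma recCone_subset (hC : IsGoodCone n C) {K : Set (En n)} (hK : K.Nonempty) (hKC : K ⊆ C) :
    recCone n K ⊆ C := by
  intro z hz
  obtain ⟨x, hx⟩ := hK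
  have hmem : ∀ t : ℝ, 0 < t → t • x + z ∈ C := fun t ht => by
    have h := hC.smul_mem (hKC (hz x hx t⁻¹ (inv_pos.2 ht).le)) ht.le
    rwa [smul_add, smul_inv_smul₀ ht.ne'] at h
  have hlim : Tendsto (fun t : ℝ => t • x + z) (𝓝[>] 0) (𝓝 z) := by
    have hcont : Continuous fun t : ℝ => t • x + z := by fun_prop
    simpa only [zero_smul, zero_add] using (hcont.tendsto 0).mono_left nhdsWithin_le_nhds
  exact hC.1.mem_of_tendsto hlim (eventually_mem_nhdsWithin.mono hmem)

end IsGoodCone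

end Cone

section WulffShape

variable {n : ℕ} {C ϖ : Set (En n)} {g : En n → ℝ}

lemma mem_wulff {y : En n} : y ∈ wulff n C ϖ g ↔ y ∈ C ∧ ∀ u ∈ ϖ, ⟪y, u⟫ ≤ -g u := by
  simp only [wulff, mem_inter_iff, mem_iInter, mem_ofPred_eq]

namespace IsWulffDatum

lemma wulff_eq (h : IsWulffDatum ϖ g) : wulff n C ϖ g = C ∩ {y | 1 ≤ wulffGauge ϖ g y} := by
  ext y
  rw [mem_wulff, mem_inter_iff, mem_ofPred_eq, h.one_le_wulffGauge_iff]

lemma wulffGauge_pos_of_mem (h : IsWulffDatum ϖ g) (hϖ : ϖ ⊆ omegaDual n C) {y : En n}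
    (hy : y ∈ C) (hy0 : y ≠ 0) : 0 < wulffGauge ϖ g y :=
  h.wulffGauge_pos fun _ hu => inner_neg_of_mem_interior_dualCone hy hy0 (hϖ hu).2

lemma inv_wulffGauge_smul_mem_wulff (h : IsWulffDatum ϖ g) (hC : IsGoodCone n C)
    {y : En n} (hy : y ∈ C) (hpos : 0 < wulffGauge ϖ g y) :
    (wulffGauge ϖ g y)⁻¹ • y ∈ wulff n C ϖ g := by
  rw [h.wulff_eq]
  refine ⟨hC.smul_mem hy (inv_pos.2 hpos).le, ?_⟩
  rw [mem_ofPred_eq, wulffGauge_smul (inv_pos.2 hpos).le, inv_mul_cancel₀ hpos.ne']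

lemma isPseudoCone_wulff [Nontrivial (En n)] (h : IsWulffDatum ϖ g) (hC : IsGoodCone n C)
    (hϖ : ϖ ⊆ omegaDual n C) : IsPseudoCone n (wulff n C ϖ g) := by
  refine ⟨?_, ?_, ?_, ?_, ?_⟩
  · obtain ⟨x, hx, hx0⟩ := hC.exists_mem_interior_ne_zero
    have hpos := h.wulffGauge_pos_of_mem hϖ (interior_subset hx) hx0
    exact ⟨_, h.inv_wulffGauge_smul_mem_wulff hC (interior_subset hx) hpos⟩
  · rw [h.wulff_eq]
    exact hC.1.inter (isClosed_le continuous_const h.continuous_wulffGauge)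
  · exact hC.2.1.inter (convex_iInter₂ fun u _ =>
      convex_halfSpace_le ((innerₗ (En n)).flip u).isLinear (-g u))
  · intro h0
    obtain ⟨u, hu⟩ := h.nonempty
    have hle := (mem_wulff.1 h0).2 u hu
    rw [inner_zero_left, le_neg, neg_zero] at hle
    exact hle.not_gt (h.pos u hu)
  · intro t ht
    rw [h.wulff_eq, smul_set_subset_iff]
    rintro x ⟨hxC, hx1⟩
    have ht0 := zero_le_one.trans ht
    refine ⟨hC.smul_mem hxC ht0, ?_⟩
    rw [mem_ofPred_eq, wulffGauge_smul ht0]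
    exact one_le_mul_of_one_le_of_one_le ht hx1

lemma recCone_wulff [Nontrivial (En n)] (h : IsWulffDatum ϖ g) (hC : IsGoodCone n C)
    (hϖ : ϖ ⊆ omegaDual n C) : recCone n (wulff n C ϖ g) = C := by
  refine (hC.recCone_subset (h.isPseudoCone_wulff hC hϖ).1 inter_subset_left).antisymm
    fun z hz x hx t ht => ?_
  have htz := hC.smul_mem hz ht
  rw [mem_wulff] at hx ⊢
  refine ⟨hC.add_mem hx.1 htz, fun u hu => ?_⟩
  have hle : ⟪t • z, u⟫ ≤ 0 := by
    simpa only [real_inner_comm] using interior_subset (hϖ hu).2 _ htz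
  rw [inner_add_left]
  exact add_le_of_le_of_nonpos (hx.2 u hu) hle

lemma cDetermined_wulff [Nontrivial (En n)] (h : IsWulffDatum ϖ g) (hC : IsGoodCone n C)
    (hϖ : ϖ ⊆ omegaDual n C) : CDetermined n C ϖ (wulff n C ϖ g) := by
  have hK := h.isPseudoCone_wulff hC hϖ
  have hbound (u : En n) (hu : u ∈ ϖ) :
      -g u ∈ upperBounds ((fun y => ⟪y, u⟫) '' wulff n C ϖ g) :=
    forall_mem_image.2 fun y hy => (mem_wulff.1 hy).2 u hu
  refine ⟨⟨hK, h.recCone_wulff hC hϖ⟩, Subset.antisymm (fun x hx => ⟨hx.1, ?_⟩) ?_⟩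
  · exact mem_iInter₂.2 fun u hu => le_csSup ⟨_, hbound u hu⟩ (mem_image_of_mem _ hx)
  · refine inter_subset_inter_right _ (iInter₂_mono fun u hu x hx => ?_)
    exact (show ⟪x, u⟫ ≤ _ from hx).trans (csSup_le (hK.1.image _) (hbound u hu))

lemma eq_wulffNormal_of_mem_normalsAt_wulff (h : IsWulffDatum ϖ g) (hC : IsGoodCone n C)
    {x v : En n} (hx : x ∈ interior C) (hx1 : wulffGauge ϖ g x = 1)
    (hd : DifferentiableAt ℝ (wulffGauge ϖ g) x) (hv : v ∈ normalsAt n (wulff n C ϖ g) x) :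
    v = wulffNormal ϖ g x := by
  -- By homogeneity, `⟪z, v⟫ ≤ ⟪x, v⟫` on the Wulff shape says `⟪z, v⟫ ≤ ⟪x, v⟫ * wulffGauge z`
  -- near `x`, with equality at `x`.
  have hmin : IsLocalMin (fun z => ⟪x, v⟫ * wulffGauge ϖ g z - ⟪v, z⟫) x := by
    filter_upwards [mem_interior_iff_mem_nhds.1 hx,
      h.continuous_wulffGauge.continuousAt.eventually_const_lt (hx1 ▸ zero_lt_one)] with z hzC hz
    have hle := hv.2 _ (h.inv_wulffGauge_smul_mem_wulff hC hzC hz)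
    rw [real_inner_smul_left, inv_mul_le_iff₀ hz, mul_comm] at hle
    rw [hx1, mul_one, real_inner_comm x v, sub_self, real_inner_comm z v]
    exact sub_nonneg.2 hle
  have hgrad : ⟪x, v⟫ • gradient (wulffGauge ϖ g) x = v := by
    refine eq_of_hasGradientAt_of_isLocalExtr_sub_inner (hasGradientAt_iff_hasFDerivAt.2 ?_)
      (.inl hmin)
    simpa only [map_smul] using hd.hasGradientAt.hasFDerivAt.const_mul ⟪x, v⟫
  have hneg : ⟪x, v⟫ ≤ 0 := by
    have h2x : (2 : ℝ) • x ∈ wulff n C ϖ g := by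
      rw [h.wulff_eq, mem_inter_iff, mem_ofPred_eq, wulffGauge_smul zero_le_two, hx1]
      exact ⟨hC.smul_mem (interior_subset hx) zero_le_two, by norm_num⟩
    have hle := hv.2 _ h2x
    rw [real_inner_smul_left] at hle
    linarith
  have hnorm : -⟪x, v⟫ * ‖gradient (wulffGauge ϖ g) x‖ = 1 := by
    rw [← Real.norm_of_nonpos hneg, ← norm_smul, hgrad, hv.1]
  rw [wulffNormal, ← eq_inv_of_mul_eq_one_left hnorm, neg_smul, neg_neg, hgrad]

lemma normalsAt_wulff (h : IsWulffDatum ϖ g) (hC : IsGoodCone n C) (hϖ : ϖ ⊆ omegaDual n C)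
    {x : En n} (hx : x ∈ interior C) (hx1 : wulffGauge ϖ g x = 1)
    (hd : DifferentiableAt ℝ (wulffGauge ϖ g) x) :
    normalsAt n (wulff n C ϖ g) x = {wulffNormal ϖ g x} := by
  have hunit (u : En n) (hu : u ∈ ϖ) : ‖u‖ = 1 := mem_sphere_zero_iff_norm.1 (hϖ hu).1
  obtain ⟨u, hu, heq⟩ := h.exists_eq_wulffGauge x
  have hinner : ⟪x, u⟫ = -g u := by
    rw [hx1, div_eq_one_iff_eq (h.pos u hu).ne'] at heq
    rw [← heq, neg_neg]
  refine Subset.antisymm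
    (fun v hv => h.eq_wulffNormal_of_mem_normalsAt_wulff hC hx hx1 hd hv) ?_
  rw [singleton_subset_iff, h.wulffNormal_eq hd hu (hunit u hu) heq]
  refine ⟨hunit u hu, fun y hy => ?_⟩
  exact ((mem_wulff.1 hy).2 u hu).trans_eq hinner.symm

lemma mem_frontier_wulff_iff (h : IsWulffDatum ϖ g) {x : En n} (hx : x ∈ interior C) :
    x ∈ frontier (wulff n C ϖ g) ↔ wulffGauge ϖ g x = 1 := by
  rw [h.wulff_eq]
  refine ⟨fun hfr => ?_, fun hx1 => ⟨subset_closure ⟨interior_subset hx, hx1.ge⟩, fun hint => ?_⟩⟩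
  · rcases frontier_inter_subset _ _ hfr with ⟨hxC, -⟩ | ⟨-, hx1⟩
    · exact absurd hx hxC.2
    · exact (frontier_le_subset_eq continuous_const h.continuous_wulffGauge hx1).symm
  · have hlim : Tendsto (fun t : ℝ => t • x) (𝓝 1) (𝓝 x) :=
      (by fun_prop : Continuous fun t : ℝ => t • x).tendsto' 1 x (one_smul ℝ x)
    have hmem : ∀ᶠ t : ℝ in 𝓝 1, 1 ≤ wulffGauge ϖ g (t • x) :=
      hlim.eventually (mem_of_superset (mem_interior_iff_mem_nhds.1 hint) inter_subset_right)
    obtain ⟨t, ht, ht0, ht1⟩ := ((hmem.filter_mono nhdsWithin_le_nhds).and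
      (Ioo_mem_nhdsLT one_pos)).exists
    rw [wulffGauge_smul ht0.le, hx1, mul_one] at ht
    exact ht.not_gt ht1

lemma mem_nuInv_wulff_iff (h : IsWulffDatum ϖ g) (hC : IsGoodCone n C) (hϖ : ϖ ⊆ omegaDual n C)
    {ω : Set (En n)} {x : En n} (hx : x ∈ interior C)
    (hd : DifferentiableAt ℝ (wulffGauge ϖ g) x) :
    x ∈ nuInv n (wulff n C ϖ g) ω ↔ wulffGauge ϖ g x = 1 ∧ wulffNormal ϖ g x ∈ ω := by
  rw [nuInv, mem_ofPred_eq, h.mem_frontier_wulff_iff hx]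
  refine and_congr_right fun hx1 => ?_
  simp only [h.normalsAt_wulff hC hϖ hx hx1 hd, singleton_eq_singleton_iff, exists_eq_right']

lemma mem_biUnion_segment_nuInv_wulff_iff (h : IsWulffDatum ϖ g) (hC : IsGoodCone n C)
    (hϖ : ϖ ⊆ omegaDual n C) {ω : Set (En n)} {y : En n} (hy : y ∈ interior C) (hy0 : y ≠ 0)
    (hd : DifferentiableAt ℝ (wulffGauge ϖ g) y) :
    y ∈ ⋃ x ∈ nuInv n (wulff n C ϖ g) ω, segment ℝ 0 x ↔
      wulffGauge ϖ g y ≤ 1 ∧ wulffNormal ϖ g y ∈ ω := by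
  have hscale {t : ℝ} (ht : 0 < t) : t • y ∈ nuInv n (wulff n C ϖ g) ω ↔
      t * wulffGauge ϖ g y = 1 ∧ wulffNormal ϖ g y ∈ ω := by
    rw [h.mem_nuInv_wulff_iff hC hϖ (hC.smul_mem_interior hy ht)
      ((differentiableAt_wulffGauge_smul ht).2 hd), wulffGauge_smul ht.le, wulffNormal_smul ht]
  simp only [mem_iUnion, exists_prop, segment_eq_image, smul_zero, zero_add, mem_image]
  constructor
  · rintro ⟨x, hx, t, ⟨ht0, ht1⟩, rfl⟩
    have ht : 0 < t := ht0.lt_of_ne fun h0 => hy0 (by rw [← h0, zero_smul])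
    rw [← inv_smul_smul₀ ht.ne' x, hscale (inv_pos.2 ht)] at hx
    rw [inv_mul_eq_one₀ ht.ne'] at hx
    exact ⟨hx.1 ▸ ht1, hx.2⟩
  · rintro ⟨hy1, hω⟩
    have hpos := h.wulffGauge_pos_of_mem hϖ (interior_subset hy) hy0
    refine ⟨(wulffGauge ϖ g y)⁻¹ • y, (hscale (inv_pos.2 hpos)).2
      ⟨inv_mul_cancel₀ hpos.ne', hω⟩, wulffGauge ϖ g y, ⟨hpos.le, hy1⟩, ?_⟩
    exact smul_inv_smul₀ hpos.ne' y

lemma biUnion_segment_nuInv_wulff_ae_eq [Nontrivial (En n)] (h : IsWulffDatum ϖ g)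
    (hC : IsGoodCone n C) (hϖ : ϖ ⊆ omegaDual n C) (ω : Set (En n)) :
    (⋃ x ∈ nuInv n (wulff n C ϖ g) ω, segment ℝ 0 x : Set (En n)) =ᵐ[volume]
      ((C \ {0}) ∩ wulffNormal ϖ g ⁻¹' ω ∩ {y | wulffGauge ϖ g y ≤ 1} : Set (En n)) := by
  obtain ⟨L, hL⟩ := h.exists_lipschitzWith_wulffGauge
  have hfrontier : ∀ᵐ y : En n, y ∉ frontier C :=
    measure_eq_zero_iff_ae_notMem.1 (hC.2.1.addHaar_frontier volume)
  have hclosed := (h.isPseudoCone_wulff hC hϖ).2.1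
  filter_upwards [hL.ae_differentiableAt, hfrontier, Measure.ae_ne volume 0] with y hd hyC hy0
  refine propext ?_
  by_cases hy : y ∈ C
  · have hint : y ∈ interior C := by
      rw [frontier, hC.1.closure_eq, Set.mem_sdiff, not_and_not_right] at hyC
      exact hyC hy
    exact (h.mem_biUnion_segment_nuInv_wulff_iff hC hϖ hint hy0 hd).trans
      ⟨fun ⟨h1, h2⟩ => ⟨⟨⟨hy, hy0⟩, h2⟩, h1⟩, fun ⟨⟨_, h2⟩, h1⟩ => ⟨h1, h2⟩⟩
  · refine iff_of_false (fun hmem => hy ?_) fun hmem => hy hmem.1.1.1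
    obtain ⟨x, hx, hyx⟩ := mem_iUnion₂.1 hmem
    have hxC : x ∈ C := (hclosed.frontier_subset hx.1).1
    exact hC.2.1.segment_subset (zero_smul ℝ x ▸ hC.smul_mem hxC le_rfl) hxC hyx

end IsWulffDatum

end WulffShape

section Polar

open Module (finrank finrank_pos)

variable {E : Type*} [NormedAddCommGroup E] [NormedSpace ℝ E] [MeasurableSpace E] [BorelSpace E]
  (μ : Measure E)

lemma ae_toSphere_of_ae {p : E → Prop} (hp : MeasurableSet {y | p y})
    (hsmul : ∀ y, ∀ t > (0 : ℝ), p (t • y) → p y) (h : ∀ᵐ y ∂μ, p y) :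
    ∀ᵐ v : Metric.sphere (0 : E) 1 ∂μ.toSphere, p v := by
  have hmeas : MeasurableSet {v : Metric.sphere (0 : E) 1 | ¬p v} :=
    measurable_subtype_coe hp.compl
  rw [ae_iff, Measure.toSphere_apply' _ hmeas]
  refine mul_eq_zero_of_right _ (measure_mono_null ?_ (ae_iff.1 h))
  rintro _ ⟨t, ht, _, ⟨v, hv, rfl⟩, rfl⟩ hcon
  exact hv (hsmul v t ht.1 hcon)

variable [FiniteDimensional ℝ E] [Nontrivial E] [μ.IsAddHaarMeasure]

lemma lintegral_eq_lintegral_toSphere {F : E → ℝ≥0∞} (hF : Measurable F) :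
    ∫⁻ y, F y ∂μ = ∫⁻ v : Metric.sphere (0 : E) 1, (∫⁻ r in Ioi (0 : ℝ),
      ENNReal.ofReal (r ^ (finrank ℝ E - 1)) * F (r • (v : E))) ∂μ.toSphere := by
  set G : Metric.sphere (0 : E) 1 × Ioi (0 : ℝ) → ℝ≥0∞ := fun p => F ((p.2 : ℝ) • (p.1 : E))
  have hG : Measurable G := hF.comp (by fun_prop)
  calc ∫⁻ y, F y ∂μ = ∫⁻ y in ({0}ᶜ : Set E), F y ∂μ := by rw [restrict_compl_singleton]
    _ = ∫⁻ y : ({0}ᶜ : Set E), G (homeomorphUnitSphereProd E y) ∂μ.comap (↑) := by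
        rw [← lintegral_subtype_comap (measurableSet_singleton _).compl]
        refine lintegral_congr fun y => ?_
        simp only [G, homeomorphUnitSphereProd_apply_snd_coe,
          homeomorphUnitSphereProd_apply_fst_coe, smul_inv_smul₀ (norm_ne_zero_iff.2 y.2)]
    _ = ∫⁻ v, ∫⁻ r, G (v, r) ∂Measure.volumeIoiPow (finrank ℝ E - 1) ∂μ.toSphere := by
        rw [μ.measurePreserving_homeomorphUnitSphereProd.lintegral_comp hG,
          lintegral_prod _ hG.aemeasurable]
    _ = _ := by
        refine lintegral_congr fun v => ?_
        rw [Measure.volumeIoiPow,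
          lintegral_withDensity_eq_lintegral_mul _ (by fun_prop) (by fun_prop)]
        exact lintegral_subtype_comap measurableSet_Ioi
          fun r => ENNReal.ofReal (r ^ (finrank ℝ E - 1)) * F (r • (v : E))

lemma lintegral_Ioc_rpow_mul {s a c : ℝ} (hs : 0 < s) (ha : 0 ≤ a) (hc : 0 ≤ c) :
    ∫⁻ r in Ioc 0 a, ENNReal.ofReal (r ^ (s - 1) * c) = ENNReal.ofReal (c / s * a ^ s) := by
  have hint : IntervalIntegrable (fun r : ℝ => r ^ (s - 1) * c) volume 0 a :=
    (intervalIntegral.intervalIntegrable_rpow' (by linarith)).mul_const c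
  have hnonneg : ∀ᵐ r ∂volume.restrict (Ioc 0 a), 0 ≤ r ^ (s - 1) * c :=
    ae_restrict_of_forall_mem measurableSet_Ioc fun r hr =>
      mul_nonneg (Real.rpow_nonneg hr.1.le _) hc
  rw [← ofReal_integral_eq_lintegral_ofReal hint.1 hnonneg, ← intervalIntegral.integral_of_le ha,
    intervalIntegral.integral_mul_const, integral_rpow (.inl (by linarith)), sub_add_cancel,
    Real.zero_rpow hs.ne', sub_zero, div_mul_eq_mul_div, div_mul_eq_mul_div,
    mul_comm]

lemma setLIntegral_inter_le_one_eq_toSphere {D : Set E} {p Θ : E → ℝ} {q : ℝ}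
    (hq : q < finrank ℝ E) (hDm : MeasurableSet D) (hD : ∀ y, ∀ t > (0 : ℝ), t • y ∈ D ↔ y ∈ D)
    (hp : Measurable p) (hpos : ∀ y ∈ D, 0 < p y) (hpsmul : ∀ y ∈ D, ∀ t > 0, p (t • y) = t * p y)
    (hΘ : Measurable (D.indicator Θ)) (hΘ0 : ∀ y ∈ D, 0 ≤ Θ y)
    (hΘsmul : ∀ y ∈ D, ∀ t > 0, Θ (t • y) = t ^ (-q) * Θ y) :
    ∫⁻ y in D ∩ {y | p y ≤ 1}, ENNReal.ofReal (Θ y) ∂μ =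
      ∫⁻ v : Metric.sphere (0 : E) 1 in (↑) ⁻¹' D,
        ENNReal.ofReal (Θ v / (finrank ℝ E - q) * (p v)⁻¹ ^ (finrank ℝ E - q)) ∂μ.toSphere := by
  have hball : MeasurableSet {y | p y ≤ 1} := measurableSet_le hp measurable_const
  have hF : (D ∩ {y | p y ≤ 1}).indicator (fun y => ENNReal.ofReal (Θ y)) =
      {y | p y ≤ 1}.indicator fun y => ENNReal.ofReal (D.indicator Θ y) := by
    rw [inter_comm, ← indicator_indicator]
    exact congrArg _ (indicator_comp_of_zero ENNReal.ofReal_zero)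
  rw [← lintegral_indicator (hDm.inter hball),
    ← lintegral_indicator (measurable_subtype_coe hDm),
    lintegral_eq_lintegral_toSphere μ (hF ▸ hΘ.ennreal_ofReal.indicator hball)]
  refine lintegral_congr fun v => ?_
  by_cases hv : (v : E) ∈ D
  · rw [indicator_of_mem (by exact hv), ← lintegral_Ioc_rpow_mul (sub_pos.2 hq)
      (inv_pos.2 (hpos v hv)).le (hΘ0 v hv), ← Iic_inter_Ioi,
      ← setLIntegral_indicator measurableSet_Iic]
    refine setLIntegral_congr_fun measurableSet_Ioi fun r hr => ?_
    have hmem : r • (v : E) ∈ D ∩ {y | p y ≤ 1} ↔ r ∈ Iic (p v)⁻¹ := by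
      rw [mem_inter_iff, hD v r hr, mem_ofPred_eq, hpsmul v hv r hr, mem_Iic,
        ← one_div, le_div_iff₀ (hpos v hv)]
      exact and_iff_right hv
    have hpow : r ^ (finrank ℝ E - 1) * (r ^ (-q) * Θ v) = r ^ (finrank ℝ E - q - 1) * Θ v := by
      rw [← Real.rpow_natCast, Nat.cast_pred finrank_pos, ← mul_assoc, ← Real.rpow_add hr]
      ring_nf
    by_cases hr1 : r ∈ Iic (p v)⁻¹
    · rw [indicator_of_mem hr1, indicator_of_mem (hmem.2 hr1), hΘsmul v hv r hr,
        ← ENNReal.ofReal_mul (pow_nonneg (le_of_lt hr) _), hpow]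
    · rw [indicator_of_notMem hr1, indicator_of_notMem (mt hmem.1 hr1), mul_zero]
  · rw [indicator_of_notMem (by exact hv)]
    refine (setLIntegral_congr_fun measurableSet_Ioi fun r hr => ?_).trans lintegral_zero
    rw [indicator_of_notMem fun h => hv ((hD v r hr).1 h.1), mul_zero]

end Polar

section ConeSphere

variable {n : ℕ} {C ϖ : Set (En n)} {g Θ : En n → ℝ} {q : ℝ}

/-- The set `C ∩ S^{n-1}` of directions of the cone `C`, as a subset of the sphere. -/
def coneSphere (C : Set (En n)) : Set (Metric.sphere (0 : En n) 1) := (↑) ⁻¹' C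

lemma compactSpace_coneSphere (hC : IsClosed C) : CompactSpace (coneSphere C) :=
  isCompact_iff_compactSpace.1 (hC.preimage continuous_subtype_val).isCompact

lemma coe_coneSphere_mem (v : coneSphere C) : (v : En n) ∈ C \ {0} :=
  ⟨v.2, Metric.ne_of_mem_sphere v.1.2 one_ne_zero⟩

/-- The spherical measure with density `Θ / s` on the directions of the cone `C`. For `Θ`
homogeneous of degree `-q` and `s = n - q`, this is the measure with density `Θ` on
`{x ∈ C | ‖x‖ ≤ 1}`, projected along rays. -/
def coneSphereMeasure (C : Set (En n)) (Θ : En n → ℝ) (s : ℝ) : Measure (coneSphere C) :=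
  ((volume : Measure (En n)).toSphere.comap (↑)).withDensity fun v => ENNReal.ofReal (Θ v / s)

lemma IsThetaWeight.continuous_coneSphere (hΘ : IsThetaWeight n C q Θ) :
    Continuous fun v : coneSphere C => Θ v :=
  hΘ.1.comp_continuous (by fun_prop) coe_coneSphere_mem

lemma IsThetaWeight.measurable_indicator (hΘ : IsThetaWeight n C q Θ) {D : Set (En n)}
    (hD : MeasurableSet D) (hDC : D ⊆ C \ {0}) : Measurable (D.indicator Θ) := by
  classical
  rw [← piecewise_eq_indicator]
  exact (hΘ.1.mono hDC).measurable_piecewise continuousOn_const hD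

lemma isFiniteMeasure_coneSphereMeasure (hC : IsClosed C) (hΘ : IsThetaWeight n C q Θ) (s : ℝ) :
    IsFiniteMeasure (coneSphereMeasure C Θ s) := by
  have := compactSpace_coneSphere hC
  exact isFiniteMeasure_withDensity_ofReal
    (integrable_continuousMap _ ⟨_, hΘ.continuous_coneSphere.div_const s⟩).2

lemma coneSphereMeasure_ne_zero [Nontrivial (En n)] (hC : IsGoodCone n C)
    (hΘ : IsThetaWeight n C q Θ) {s : ℝ} (hs : 0 < s) : coneSphereMeasure C Θ s ≠ 0 := by
  have hms : MeasurableSet (coneSphere C) := hC.1.measurableSet.preimage measurable_subtype_coe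
  have hdens (v : coneSphere C) : ENNReal.ofReal (Θ v / s) ≠ 0 :=
    (ENNReal.ofReal_pos.2 (div_pos (hΘ.2.1 _ (coe_coneSphere_mem v)) hs)).ne'
  obtain ⟨x, hx, hx0⟩ := hC.exists_mem_interior_ne_zero
  have hxn : 0 < ‖x‖ := norm_pos_iff.2 hx0
  have hopen : IsOpen ((↑) ⁻¹' interior C : Set (Metric.sphere (0 : En n) 1)) :=
    isOpen_interior.preimage continuous_subtype_val
  have hpos := hopen.measure_pos (volume : Measure (En n)).toSphere
    ⟨⟨‖x‖⁻¹ • x, by simp [norm_smul, hxn.ne']⟩, hC.smul_mem_interior hx (inv_pos.2 hxn)⟩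
  intro hzero
  rw [← Measure.measure_univ_eq_zero, coneSphereMeasure, withDensity_apply_eq_zero
    (hΘ.continuous_coneSphere.div_const s).measurable.ennreal_ofReal, inter_univ,
    (eq_univ_of_forall hdens : {v : coneSphere C | _} = _), comap_subtype_coe_apply hms,
    image_univ, Subtype.range_coe] at hzero
  exact hpos.ne' (measure_mono_null (preimage_mono interior_subset) hzero)

lemma IsWulffDatum.ae_differentiableAt_coneSphereMeasure (h : IsWulffDatum ϖ g)
    (hC : IsClosed C) (s : ℝ) :
    ∀ᵐ v : coneSphere C ∂coneSphereMeasure C Θ s,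
      DifferentiableAt ℝ (wulffGauge ϖ g) (v : En n) := by
  have hms : MeasurableSet (coneSphere C) := hC.measurableSet.preimage measurable_subtype_coe
  obtain ⟨L, hL⟩ := h.exists_lipschitzWith_wulffGauge
  have hsphere := ae_toSphere_of_ae volume (measurableSet_of_differentiableAt ℝ (wulffGauge ϖ g))
    (fun _ _ ht hd => (differentiableAt_wulffGauge_smul ht).1 hd) hL.ae_differentiableAt
  have hcomap : ∀ᵐ v : coneSphere C ∂((volume : Measure (En n)).toSphere.comap (↑)),
      DifferentiableAt ℝ (wulffGauge ϖ g) (v : En n) := by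
    refine ae_of_ae_map (p := fun v : Metric.sphere (0 : En n) 1 =>
      DifferentiableAt ℝ (wulffGauge ϖ g) (v : En n)) measurable_subtype_coe.aemeasurable ?_
    rw [map_comap_subtype_coe hms]
    exact ae_restrict_of_ae hsphere
  exact (withDensity_absolutelyContinuous _ _).ae_le hcomap

lemma IsWulffDatum.coneVol_wulff_eq_setLIntegral_toSphere [Nontrivial (En n)]
    (h : IsWulffDatum ϖ g) (hC : IsGoodCone n C) (hϖ : ϖ ⊆ omegaDual n C)
    (hΘ : IsThetaWeight n C q Θ) (hq : q < n) {ω : Set (En n)} (hω : MeasurableSet ω) :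
    coneVol n Θ (wulff n C ϖ g) ω =
      ∫⁻ v : Metric.sphere (0 : En n) 1 in (↑) ⁻¹' ((C \ {0}) ∩ wulffNormal ϖ g ⁻¹' ω),
        ENNReal.ofReal (Θ v / (n - q) * (wulffGauge ϖ g v)⁻¹ ^ (n - q))
          ∂(volume : Measure (En n)).toSphere := by
  set D := (C \ {0}) ∩ wulffNormal ϖ g ⁻¹' ω
  have hDm : MeasurableSet D :=
    (hC.1.measurableSet.diff (measurableSet_singleton 0)).inter (measurable_wulffNormal hω)
  have hcone (y : En n) (t : ℝ) (ht : t > 0) : t • y ∈ D ↔ y ∈ D := by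
    simp only [D, mem_inter_iff, Set.mem_sdiff, mem_singleton_iff, mem_preimage,
      hC.smul_mem_iff ht, smul_eq_zero_iff_right ht.ne', wulffNormal_smul ht]
  have hpolar := setLIntegral_inter_le_one_eq_toSphere volume (Θ := Θ)
    (by rwa [finrank_euclideanSpace_fin]) hDm hcone h.continuous_wulffGauge.measurable
    (fun y hy => h.wulffGauge_pos_of_mem hϖ hy.1.1 hy.1.2)
    (fun y _ t ht => wulffGauge_smul ht.le y) (hΘ.measurable_indicator hDm inter_subset_left)
    (fun y hy => (hΘ.2.1 y hy.1).le) (fun y hy t ht => hΘ.2.2 y hy.1 t ht)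
  rw [coneVol, HTheta, withDensity_apply', setLIntegral_congr
    (h.biUnion_segment_nuInv_wulff_ae_eq hC hϖ ω), hpolar, finrank_euclideanSpace_fin]

lemma IsWulffDatum.coneVol_wulff [Nontrivial (En n)] (h : IsWulffDatum ϖ g)
    (hC : IsGoodCone n C) (hϖ : ϖ ⊆ omegaDual n C) (hΘ : IsThetaWeight n C q Θ) (hq : q < n)
    {ω : Set (En n)} (hω : MeasurableSet ω) :
    coneVol n Θ (wulff n C ϖ g) ω =
      ((coneSphereMeasure C Θ (n - q)).withDensity fun v =>
        ENNReal.ofReal ((wulffGauge ϖ g v)⁻¹ ^ (n - q))).map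
          (fun v : coneSphere C => wulffNormal ϖ g v) ω := by
  have hnormal : Measurable fun v : coneSphere C => wulffNormal ϖ g v :=
    measurable_wulffNormal.comp (by fun_prop)
  have hgauge : Measurable fun v : coneSphere C => (wulffGauge ϖ g v)⁻¹ ^ ((n : ℝ) - q) :=
    ((h.continuous_wulffGauge.measurable.comp (by fun_prop)).inv).pow_const _
  have himage : ((↑) '' ((fun v : coneSphere C => wulffNormal ϖ g v) ⁻¹' ω) :
      Set (Metric.sphere (0 : En n) 1)) = (↑) ⁻¹' ((C \ {0}) ∩ wulffNormal ϖ g ⁻¹' ω) := by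
    ext v
    refine ⟨?_, fun hv => ⟨⟨v, hv.1.1⟩, hv.2, rfl⟩⟩
    rintro ⟨w, hw, rfl⟩
    exact ⟨coe_coneSphere_mem w, hw⟩
  rw [h.coneVol_wulff_eq_setLIntegral_toSphere hC hϖ hΘ hq hω, ← himage,
    Measure.map_apply hnormal hω, withDensity_apply _ (hnormal hω), coneSphereMeasure,
    setLIntegral_withDensity_eq_setLIntegral_mul _
      (hΘ.continuous_coneSphere.div_const _).measurable.ennreal_ofReal hgauge.ennreal_ofReal
      (hnormal hω)]
  refine (setLIntegral_subtype (hC.1.measurableSet.preimage measurable_subtype_coe) _ _).symm.trans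
    (lintegral_congr fun v => ?_)
  rw [ENNReal.ofReal_mul (div_nonneg (hΘ.2.1 _ (coe_coneSphere_mem v)).le (sub_pos.2 hq).le)]
  rfl

end ConeSphere

section LogCost

variable {n : ℕ} {C ϖ : Set (En n)}

/-- The cost `log (-⟪v, u⟫)` between directions `v` of the cone and normals `u`, for which the
`c`-transform of `log g` is `-log` of the gauge of the Wulff shape of `g`. -/
def logCost (hϖ : ϖ ⊆ omegaDual n C) : C(coneSphere C × ϖ, ℝ) where
  toFun p := Real.log (-⟪(p.1 : En n), (p.2 : En n)⟫)
  continuous_toFun := Continuous.log (by fun_prop) fun p =>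
    have hv := coe_coneSphere_mem p.1
    (neg_pos.2 (inner_neg_of_mem_interior_dualCone hv.1 hv.2 (hϖ p.2.2).2)).ne'

lemma isWulffDatum_exp (hϖc : IsCompact ϖ) (hϖne : ϖ.Nonempty) (F : C(En n, ℝ)) :
    IsWulffDatum ϖ fun u => Real.exp (F u) :=
  ⟨hϖc, hϖne, by fun_prop, fun u _ => Real.exp_pos (F u)⟩

lemma sub_logCost_eq (hϖ : ϖ ⊆ omegaDual n C) (F : C(En n, ℝ)) (v : coneSphere C) (u : ϖ) :
    F u - logCost hϖ (v, u) = -Real.log (-⟪(v : En n), (u : En n)⟫ / Real.exp (F u)) := by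
  have hv := coe_coneSphere_mem v
  have hneg := inner_neg_of_mem_interior_dualCone hv.1 hv.2 (hϖ u.2).2
  rw [Real.log_div (neg_pos.2 hneg).ne' (Real.exp_ne_zero _), Real.log_exp, neg_sub]
  rfl

lemma cTransform_logCost [CompactSpace ϖ] [Nonempty ϖ] (hϖ : ϖ ⊆ omegaDual n C)
    (F : C(En n, ℝ)) (v : coneSphere C) :
    cTransform (logCost hϖ) (F.restrict ϖ) v =
      -Real.log (wulffGauge ϖ (fun u => Real.exp (F u)) v) := by
  have h := isWulffDatum_exp (isCompact_iff_compactSpace.2 ‹_›) (nonempty_coe_sort.1 ‹_›) F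
  have hv := coe_coneSphere_mem v
  have hpos := h.wulffGauge_pos_of_mem hϖ hv.1 hv.2
  refine (cTransform_le _ fun u => ?_).antisymm ?_
  · exact (sub_logCost_eq hϖ F v u).trans_le
      (neg_le_neg (Real.log_le_log hpos (h.wulffGauge_le v u.2)))
  · obtain ⟨u, hu, heq⟩ := h.exists_eq_wulffGauge (v : En n)
    rw [← heq, ← sub_logCost_eq hϖ F v ⟨u, hu⟩]
    exact sub_le_cTransform (logCost hϖ) (F.restrict ϖ) v ⟨u, hu⟩

lemma eq_wulffNormal_of_eq_cTransform_logCost [CompactSpace ϖ] [Nonempty ϖ]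
    (hϖ : ϖ ⊆ omegaDual n C) {F : C(En n, ℝ)} {v : coneSphere C}
    (hd : DifferentiableAt ℝ (wulffGauge ϖ fun u => Real.exp (F u)) (v : En n)) {u : ϖ}
    (hu : F.restrict ϖ u - logCost hϖ (v, u) = cTransform (logCost hϖ) (F.restrict ϖ) v) :
    wulffNormal ϖ (fun u => Real.exp (F u)) (v : En n) = u := by
  have h := isWulffDatum_exp (isCompact_iff_compactSpace.2 ‹_›) (nonempty_coe_sort.1 ‹_›) F
  have hv := coe_coneSphere_mem v
  have hneg := inner_neg_of_mem_interior_dualCone hv.1 hv.2 (hϖ u.2).2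
  refine h.wulffNormal_eq hd u.2 (mem_sphere_zero_iff_norm.1 (hϖ u.2).1) ?_
  rw [cTransform_logCost, ContinuousMap.restrict_apply, sub_logCost_eq, neg_inj] at hu
  exact Real.log_injOn_pos (div_pos (neg_pos.2 hneg) (Real.exp_pos _))
    (h.wulffGauge_pos_of_mem hϖ hv.1 hv.2) hu

lemma exists_map_eq_map_wulffNormal [CompactSpace ϖ] (hC : IsClosed C) (hϖ : ϖ ⊆ omegaDual n C)
    (σ : Measure (coneSphere C)) [IsFiniteMeasure σ] [NeZero σ]
    (hσ : ∀ g, IsWulffDatum ϖ g →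
      ∀ᵐ v : coneSphere C ∂σ, DifferentiableAt ℝ (wulffGauge ϖ g) (v : En n))
    (φ : Measure ϖ) [IsFiniteMeasure φ] [NeZero φ] {s : ℝ} (hs : 0 < s) :
    ∃ g, IsWulffDatum ϖ g ∧ φ.map (↑) =
      (σ.withDensity fun v => ENNReal.ofReal ((wulffGauge ϖ g v)⁻¹ ^ s)).map
        fun v : coneSphere C => wulffNormal ϖ g v := by
  have := compactSpace_coneSphere hC
  have : Nonempty ϖ := φ.nonempty_of_neZero
  have hϖc : IsCompact ϖ := isCompact_iff_compactSpace.2 ‹_›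
  obtain ⟨f, hf⟩ := exists_forall_eq_map_withDensity (logCost hϖ) σ φ hs
  obtain ⟨F, rfl⟩ := ContinuousMap.exists_restrict_eq hϖc.isClosed f
  set g : En n → ℝ := fun u => Real.exp (F u)
  have h : IsWulffDatum ϖ g := isWulffDatum_exp hϖc (nonempty_coe_sort.1 ‹_›) F
  choose a ha using exists_eq_cTransform (logCost hϖ) (F.restrict ϖ)
  have hnormal : ∀ᵐ v : coneSphere C ∂σ, ∀ u, F.restrict ϖ u - logCost hϖ (v, u) =
      cTransform (logCost hϖ) (F.restrict ϖ) v → wulffNormal ϖ g (v : En n) = u :=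
    (hσ g h).mono fun v hd u hu => eq_wulffNormal_of_eq_cTransform_logCost hϖ hd hu
  have ha_eq : (fun v : coneSphere C => wulffNormal ϖ g (v : En n)) =ᵐ[σ] fun v => a v :=
    hnormal.mono fun v hv => hv (a v) (ha v)
  have ham : AEMeasurable a σ :=
    (MeasurableEmbedding.subtype_coe hϖc.measurableSet).aemeasurable_comp_iff.1
      ((measurable_wulffNormal.comp (by fun_prop)).aemeasurable.congr ha_eq)
  have hdens (v : coneSphere C) : Real.exp (s * cTransform (logCost hϖ) (F.restrict ϖ) v) =
      (wulffGauge ϖ g v)⁻¹ ^ s := by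
    have hv := coe_coneSphere_mem v
    rw [cTransform_logCost, mul_comm, ← Real.log_inv, ← Real.rpow_def_of_pos
      (inv_pos.2 (h.wulffGauge_pos_of_mem hϖ hv.1 hv.2))]
  have hac := withDensity_absolutelyContinuous σ fun v : coneSphere C =>
    ENNReal.ofReal ((wulffGauge ϖ g v)⁻¹ ^ s)
  have hφ := hf a ham (hnormal.mono fun v hv u hu =>
    Subtype.ext ((hv u hu).symm.trans (hv (a v) (ha v))))
  simp only [hdens] at hφ
  refine ⟨g, h, ?_⟩
  rw [hφ, AEMeasurable.map_map_of_aemeasurable (by fun_prop) (ham.mono_ac hac)]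
  exact Measure.map_congr (hac.ae_le ha_eq.symm)

end LogCost

theorem statement12_general (n : ℕ) (C : Set (En n)) (hC : IsGoodCone n C)
    (q : ℝ) (hq2 : q < n) (Θ : En n → ℝ) (hΘ : IsThetaWeight n C q Θ)
    (ϖ : Set (En n)) (hϖne : ϖ.Nonempty) (hϖc : IsCompact ϖ) (hϖsub : ϖ ⊆ omegaDual n C)
    (φ : Measure (En n)) (hfin : IsFiniteMeasure φ) (hnz : φ ≠ 0) (hsupp : φ ϖᶜ = 0) :
    ∃ K : Set (En n), CDetermined n C ϖ K ∧ RepsConeVol n C Θ K φ := by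
  obtain ⟨u, hu⟩ := hϖne
  have : Nontrivial (En n) := ⟨u, 0, Metric.ne_of_mem_sphere (hϖsub hu).1 one_ne_zero⟩
  have hs : 0 < (n : ℝ) - q := sub_pos.2 hq2
  have := isCompact_iff_compactSpace.1 hϖc
  have := isFiniteMeasure_coneSphereMeasure hC.1 hΘ (n - q)
  have : NeZero (coneSphereMeasure C Θ (n - q)) := ⟨coneSphereMeasure_ne_zero hC hΘ hs⟩
  have hφ : (φ.comap ((↑) : ϖ → En n)).map (↑) = φ := by
    rw [map_comap_subtype_coe hϖc.measurableSet, Measure.restrict_eq_self_of_ae_mem hsupp]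
  have : NeZero (φ.comap ((↑) : ϖ → En n)) :=
    ⟨fun hzero => hnz (by rw [← hφ, hzero, Measure.map_zero])⟩
  obtain ⟨g, h, hg⟩ := exists_map_eq_map_wulffNormal hC.1 hϖsub (coneSphereMeasure C Θ (n - q))
    (fun g h => h.ae_differentiableAt_coneSphereMeasure hC.1 _) (φ.comap (↑)) hs
  refine ⟨wulff n C ϖ g, h.cDetermined_wulff hC hϖsub,
    measure_mono_null (compl_subset_compl.2 hϖsub) hsupp, fun ω hω _ => ?_⟩
  rw [h.coneVol_wulff hC hϖsub hΘ hq2 hω, ← hg, hφ]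

/-- Every nonzero finite Borel measure on `Ω_{C°}` with support in a
nonempty compact set `ϖ ⊆ Ω_{C°}` is the `Θ`-weighted cone-volume measure of some
`K ∈ K(C,ϖ)`. -/
theorem statement12 (n : ℕ) (hn : 2 ≤ n) (C : Set (En n)) (hC : IsGoodCone n C)
    (q : ℝ) (hq1 : (n : ℝ) - 1 < q) (hq2 : q < n)
    (Θ : En n → ℝ) (hΘ : IsThetaWeight n C q Θ)
    (ϖ : Set (En n)) (hϖne : ϖ.Nonempty) (hϖc : IsCompact ϖ) (hϖsub : ϖ ⊆ omegaDual n C)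
    (φ : Measure (En n)) (hfin : IsFiniteMeasure φ) (hnz : φ ≠ 0) (hsupp : φ ϖᶜ = 0) :
    ∃ K : Set (En n), CDetermined n C ϖ K ∧ RepsConeVol n C Θ K φ :=
  statement12_general n C hC q hq2 Θ hΘ ϖ hϖne hϖc hϖsub φ hfin hnz hsupp
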